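/- For any cycle graph C_k with k ≥ 6 and single-dipped preferences, there is no false-name-proof and Pareto efficient deterministic social choice function. -/

import Mathlib

/-!
Let `U` contain every vertex of `C_k` three times, and let `c = f U`. False-name-proofness lets an
agent of a profile of at most three agents turn that profile into `U`, so every agent of such a
profile weakly prefers its outcome to `c` (`ge_statusQuo`). Together with Pareto efficiency this
pins down the outcome of a few profiles placed suitably relative to `c`, and false-name-proofness
between them gives a contradiction.

For `k = 2m`, take coordinates in which `c` is `2m - 2` and consider `A = {m, m + 2}`. Adding an
agent at `0` forces the outcome `2`, the favourite of `m + 2`, so `f A = 2`. Adding an agent at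
`m - 1` forces the outcome `2m - 1` or `0`, at distance at least `m - 1` from `m`; but
`f A = 2` is only at distance `m - 2` from `m`.

For `k = 2m + 1`, put `c` at `0` and consider `A = {1, m + 3}`. The profile `{1, m + 2}` must have
outcome `2` or `3`, both favourites of `m + 3`, so `f A` is `2` or `3`. The profile `{2, m + 3}` must
have outcome `4` or `5`, at distance at least `3` from `1`, while `f A` is at distance at most `2`.
-/

namespace FNPFL

variable {V : Type*}

/-- Single-peaked Pareto domination: `v` dominates `w` under profile `θ`
(agents prefer smaller distance). -/
def Dom (d : V → V → ℕ) (θ : Multiset V) (v w : V) : Prop :=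
  (∀ i ∈ θ, d i v ≤ d i w) ∧ ∃ i ∈ θ, d i v < d i w

/-- `w` is Pareto efficient under `θ` (single-peaked). -/
def IsPE (d : V → V → ℕ) (θ : Multiset V) (w : V) : Prop :=
  ∀ v, ¬ Dom d θ v w

/-- A social choice function is Pareto efficient (single-peaked). -/
def ParetoEfficient (d : V → V → ℕ) (f : Multiset V → V) : Prop :=
  ∀ θ : Multiset V, θ ≠ 0 → IsPE d θ (f θ)

/-- False-name-proofness (single-peaked): an agent `i ∈ θ` replaces her report by
any nonempty multiset `fake` of reports (a misreport plus possibly extra fake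
identities) and cannot obtain an outcome strictly closer to her true location. -/
def FalseNameProof [DecidableEq V] (d : V → V → ℕ) (f : Multiset V → V) : Prop :=
  ∀ θ : Multiset V, ∀ i ∈ θ, ∀ fake : Multiset V, fake ≠ 0 →
    d i (f θ) ≤ d i (f (θ.erase i + fake))

/-- Truthfulness (single-peaked): no agent benefits by a single misreport. -/
def Truthful [DecidableEq V] (d : V → V → ℕ) (f : Multiset V → V) : Prop :=
  ∀ θ : Multiset V, ∀ i ∈ θ, ∀ x : V,
    d i (f θ) ≤ d i (f (θ.erase i + {x}))

/-- `f` is the sequential Pareto rule with ordering `σ` (single-peaked):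
on every nonempty profile it outputs the first Pareto efficient vertex in `σ`. -/
def SeqParetoRule (d : V → V → ℕ) (σ : List V) (f : Multiset V → V) : Prop :=
  ∀ θ : Multiset V, θ ≠ 0 →
    ∃ l₁ l₂, σ = l₁ ++ f θ :: l₂ ∧ IsPE d θ (f θ) ∧ ∀ u ∈ l₁, ¬ IsPE d θ u

/-- Single-dipped Pareto domination: `v` dominates `w` under `θ`
(agents prefer larger distance). -/
def DomD (d : V → V → ℕ) (θ : Multiset V) (v w : V) : Prop :=
  (∀ i ∈ θ, d i w ≤ d i v) ∧ ∃ i ∈ θ, d i w < d i v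

/-- `w` is Pareto efficient under `θ` (single-dipped). -/
def IsPED (d : V → V → ℕ) (θ : Multiset V) (w : V) : Prop :=
  ∀ v, ¬ DomD d θ v w

/-- Pareto efficiency of an SCF (single-dipped). -/
def ParetoEfficientD (d : V → V → ℕ) (f : Multiset V → V) : Prop :=
  ∀ θ : Multiset V, θ ≠ 0 → IsPED d θ (f θ)

/-- False-name-proofness (single-dipped): no agent can obtain an outcome strictly
farther from her true location by misreporting and/or adding fake identities. -/
def FalseNameProofD [DecidableEq V] (d : V → V → ℕ) (f : Multiset V → V) : Prop :=
  ∀ θ : Multiset V, ∀ i ∈ θ, ∀ fake : Multiset V, fake ≠ 0 →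
    d i (f (θ.erase i + fake)) ≤ d i (f θ)

/-- Sequential Pareto rule with ordering `σ` (single-dipped). -/
def SeqParetoRuleD (d : V → V → ℕ) (σ : List V) (f : Multiset V → V) : Prop :=
  ∀ θ : Multiset V, θ ≠ 0 →
    ∃ l₁ l₂, σ = l₁ ++ f θ :: l₂ ∧ IsPED d θ (f θ) ∧ ∀ u ∈ l₁, ¬ IsPED d θ u

/-- Graph distance on the cycle `C_k` with vertices `ZMod k`. -/
def cycleDist (k : ℕ) (v w : ZMod k) : ℕ := min (v - w).val (w - v).val

/-- Manhattan (= graph) distance on a 2-dimensional grid. -/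
def gridDist {l m : ℕ} (u v : Fin l × Fin m) : ℕ :=
  Nat.dist u.1.val v.1.val + Nat.dist u.2.val v.2.val

end FNPFL

open FNPFL

/-- The distance between the residues `a` and `n` of the `k`-cycle, for `a, n < k`: the truncated
differences add up to `|a - n|`. -/
def arcDist (k a n : ℕ) : ℕ := min ((a - n) + (n - a)) (k - ((a - n) + (n - a)))

lemma val_natCast_sub {k a n : ℕ} (ha : a < k) (hn : n < k) :
    ((a : ZMod k) - (n : ZMod k)).val = if n ≤ a then a - n else k + a - n := by
  split_ifs with h
  · rw [← Nat.cast_sub h, ZMod.val_natCast, Nat.mod_eq_of_lt (by omega)]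
  · have : (a : ZMod k) - (n : ZMod k) = ((k + a - n : ℕ) : ZMod k) := by
      rw [Nat.cast_sub (by omega)]; simp
    rw [this, ZMod.val_natCast, Nat.mod_eq_of_lt (by omega)]

lemma cycleDist_add {k a n : ℕ} (b : ZMod k) (ha : a < k) (hn : n < k) :
    cycleDist k (b + a) (b + n) = arcDist k a n := by
  unfold cycleDist arcDist
  rw [add_sub_add_left_eq_sub, add_sub_add_left_eq_sub, val_natCast_sub ha hn,
    val_natCast_sub hn ha]
  split_ifs <;> omega

/-- Every vertex has a coordinate below `k` relative to a base vertex `b`. -/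
lemma exists_coord {k : ℕ} [NeZero k] (b v : ZMod k) : ∃ n < k, v = b + (n : ZMod k) :=
  ⟨(v - b).val, ZMod.val_lt _, by rw [ZMod.natCast_zmod_val]; ring⟩

lemma FNPFL.FalseNameProofD.cons_le {V : Type*} [DecidableEq V] {d : V → V → ℕ}
    {f : Multiset V → V} (h : FalseNameProofD d f) (i : V) (S fake : Multiset V)
    (hfake : fake ≠ 0) : d i (f (S + fake)) ≤ d i (f (i ::ₘ S)) := by
  simpa using h (i ::ₘ S) i (Multiset.mem_cons_self i S) fake hfake

/-- The profile in which every vertex is reported three times. It contains every profile of at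
most three agents, whether or not their locations coincide. -/
def tripleAll (V : Type*) [Fintype V] : Multiset V := 3 • (Finset.univ : Finset V).val

/-- Agents of a profile of at most three agents weakly prefer its outcome to that of
`tripleAll`. -/
lemma ge_statusQuo {V : Type*} [DecidableEq V] [Fintype V] {d : V → V → ℕ}
    {f : Multiset V → V} (h : FalseNameProofD d f) {A : Multiset V} (hA : A.card ≤ 3)
    {i : V} (hi : i ∈ A) : d i (f (tripleAll V)) ≤ d i (f A) := by
  obtain ⟨S, rfl⟩ := Multiset.exists_cons_of_mem hi
  have hle : i ::ₘ S ≤ tripleAll V := by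
    rw [Multiset.le_iff_count]
    intro a
    have h1 : Multiset.count a (Finset.univ : Finset V).val = 1 :=
      Multiset.count_eq_one_of_mem Finset.univ.nodup (Finset.mem_univ a)
    have h2 := Multiset.count_le_card a (i ::ₘ S)
    rw [tripleAll, Multiset.count_nsmul, h1]
    omega
  obtain ⟨T, hT⟩ := Multiset.le_iff_exists_add.1 hle
  have := h.cons_le i S (i ::ₘ T) (Multiset.cons_ne_zero)
  rwa [Multiset.add_cons, ← Multiset.cons_add, ← hT] at this

lemma no_scf_even (m : ℕ) (hm : 3 ≤ m) (f : Multiset (ZMod (2 * m)) → ZMod (2 * m))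
    (hF : FalseNameProofD (cycleDist (2 * m)) f)
    (hP : ParetoEfficientD (cycleDist (2 * m)) f) : False := by
  have : NeZero (2 * m) := ⟨by omega⟩
  obtain ⟨b, hb⟩ : ∃ b : ZMod (2 * m), f (tripleAll _) = b + ((2 * m - 2 : ℕ) : ZMod (2 * m)) :=
    ⟨f (tripleAll _) - ((2 * m - 2 : ℕ) : ZMod (2 * m)), by ring⟩
  have hd : ∀ {a n : ℕ}, a < 2 * m → n < 2 * m →
      cycleDist (2 * m) (b + a) (b + n) = arcDist (2 * m) a n := fun ha hn =>
    cycleDist_add b ha hn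
  -- `p`, `q` are the agents of `A`; `r` and `s` are added to it in turn.
  set p : ZMod (2 * m) := b + (m : ℕ) with hp
  set q : ZMod (2 * m) := b + (m + 2 : ℕ) with hq
  set r : ZMod (2 * m) := b + (0 : ℕ) with hr
  set s : ZMod (2 * m) := b + (m - 1 : ℕ) with hs
  obtain ⟨x, hx, hfA⟩ := exists_coord b (f {p, q})
  obtain ⟨y, hy, hfB⟩ := exists_coord b (f {p, q, r})
  obtain ⟨z, hz, hfC⟩ := exists_coord b (f {p, q, s})
  have hy2 : y = 2 := by
    have h1 := ge_statusQuo hF (A := {p, q, r}) (by simp) (i := p) (by simp)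
    have h2 := ge_statusQuo hF (A := {p, q, r}) (by simp) (i := r) (by simp)
    have h3 := hP {p, q, r} (by simp) (b + (2 : ℕ))
    rw [hfB] at h3
    simp only [DomD, Multiset.insert_eq_cons, Multiset.mem_cons, Multiset.mem_singleton,
      forall_eq_or_imp, forall_eq, exists_eq_or_imp, exists_eq_left] at h3
    rw [hb, hfB] at h1 h2
    rw [hp, hq, hr] at h3
    rw [hp] at h1
    rw [hr] at h2
    rw [hd (by omega) (by omega), hd (by omega) (by omega)] at h1 h2
    repeat rw [hd (by omega) (by omega)] at h3
    unfold arcDist at h1 h2 h3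
    omega
  have hz2 : z = 2 * m - 1 ∨ z = 0 := by
    have h1 := ge_statusQuo hF (A := {p, q, s}) (by simp) (i := s) (by simp)
    have h3 := hP {p, q, s} (by simp) (b + (0 : ℕ))
    rw [hfC] at h3
    simp only [DomD, Multiset.insert_eq_cons, Multiset.mem_cons, Multiset.mem_singleton,
      forall_eq_or_imp, forall_eq, exists_eq_or_imp, exists_eq_left] at h3
    rw [hb, hfC] at h1
    rw [hp, hq, hs] at h3
    rw [hs] at h1
    rw [hd (by omega) (by omega), hd (by omega) (by omega)] at h1
    repeat rw [hd (by omega) (by omega)] at h3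
    unfold arcDist at h1 h3
    omega
  have h1 : cycleDist (2 * m) q (f {p, q, r}) ≤ cycleDist (2 * m) q (f {p, q}) := by
    have := hF.cons_le q {p} {q, r} (by simp)
    rwa [show ({p} + {q, r} : Multiset (ZMod (2 * m))) = {p, q, r} from rfl,
      show (q ::ₘ {p} : Multiset (ZMod (2 * m))) = {p, q} from Multiset.cons_swap q p 0] at this
  have h2 : cycleDist (2 * m) p (f {p, q, s}) ≤ cycleDist (2 * m) p (f {p, q}) := by
    have := hF.cons_le p {q} {p, s} (by simp)
    rwa [show ({q} + {p, s} : Multiset (ZMod (2 * m))) = {p, q, s} from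
      Multiset.cons_swap q p {s}] at this
  rw [hfA, hfB, hq, hd (by omega) hy, hd (by omega) hx] at h1
  rw [hfA, hfC, hp, hd (by omega) hz, hd (by omega) hx] at h2
  unfold arcDist at h1 h2
  omega

set_option maxHeartbeats 1000000 in
lemma no_scf_odd (m : ℕ) (hm : 3 ≤ m) (f : Multiset (ZMod (2 * m + 1)) → ZMod (2 * m + 1))
    (hF : FalseNameProofD (cycleDist (2 * m + 1)) f)
    (hP : ParetoEfficientD (cycleDist (2 * m + 1)) f) : False := by
  obtain ⟨b, hb⟩ : ∃ b : ZMod (2 * m + 1), f (tripleAll _) = b + ((0 : ℕ) : ZMod (2 * m + 1)) :=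
    ⟨f (tripleAll _), by simp⟩
  have hd : ∀ {a n : ℕ}, a < 2 * m + 1 → n < 2 * m + 1 →
      cycleDist (2 * m + 1) (b + a) (b + n) = arcDist (2 * m + 1) a n := fun ha hn =>
    cycleDist_add b ha hn
  -- `p`, `q` are the agents of `A`; `r` replaces `p`, and `s` replaces `q`.
  set p : ZMod (2 * m + 1) := b + (1 : ℕ) with hp
  set q : ZMod (2 * m + 1) := b + (m + 3 : ℕ) with hq
  set r : ZMod (2 * m + 1) := b + (2 : ℕ) with hr
  set s : ZMod (2 * m + 1) := b + (m + 2 : ℕ) with hs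
  obtain ⟨x, hx, hfA⟩ := exists_coord b (f {p, q})
  obtain ⟨y, hy, hfB⟩ := exists_coord b (f {q, r})
  obtain ⟨z, hz, hfC⟩ := exists_coord b (f {p, s})
  have hy2 : y = 4 ∨ y = 5 := by
    have h1 := ge_statusQuo hF (A := {q, r}) (by simp) (i := q) (by simp)
    have h2 := ge_statusQuo hF (A := {q, r}) (by simp) (i := r) (by simp)
    have h3 := hP {q, r} (by simp) (b + (4 : ℕ))
    rw [hfB] at h3
    simp only [DomD, Multiset.insert_eq_cons, Multiset.mem_cons, Multiset.mem_singleton,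
      forall_eq_or_imp, forall_eq, exists_eq_or_imp, exists_eq_left] at h3
    rw [hb, hfB] at h1 h2
    rw [hq, hr] at h3
    rw [hq] at h1
    rw [hr] at h2
    rw [hd (by omega) (by omega), hd (by omega) (by omega)] at h1 h2
    repeat rw [hd (by omega) (by omega)] at h3
    unfold arcDist at h1 h2 h3
    omega
  have hz2 : z = 2 ∨ z = 3 := by
    have h1 := ge_statusQuo hF (A := {p, s}) (by simp) (i := p) (by simp)
    have h2 := ge_statusQuo hF (A := {p, s}) (by simp) (i := s) (by simp)
    have h3 := hP {p, s} (by simp) (b + (2 : ℕ))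
    rw [hfC] at h3
    simp only [DomD, Multiset.insert_eq_cons, Multiset.mem_cons, Multiset.mem_singleton,
      forall_eq_or_imp, forall_eq, exists_eq_or_imp, exists_eq_left] at h3
    rw [hb, hfC] at h1 h2
    rw [hp, hs] at h3
    rw [hp] at h1
    rw [hs] at h2
    rw [hd (by omega) (by omega), hd (by omega) (by omega)] at h1 h2
    repeat rw [hd (by omega) (by omega)] at h3
    unfold arcDist at h1 h2 h3
    omega
  have h1 : cycleDist (2 * m + 1) p (f {q, r}) ≤ cycleDist (2 * m + 1) p (f {p, q}) :=
    hF.cons_le p {q} {r} (by simp)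
  have h2 : cycleDist (2 * m + 1) q (f {p, s}) ≤ cycleDist (2 * m + 1) q (f {p, q}) := by
    have := hF.cons_le q {p} {s} (by simp)
    rwa [show (q ::ₘ {p} : Multiset (ZMod (2 * m + 1))) = {p, q} from
      Multiset.cons_swap q p 0] at this
  rw [hfA, hfB, hp, hd (by omega) hy, hd (by omega) hx] at h1
  rw [hfA, hfC, hq, hd (by omega) hz, hd (by omega) hx] at h2
  unfold arcDist at h1 h2
  omega

/-- on any cycle `C_k` with `k ≥ 6` and single-dipped preferences
there is no false-name-proof and Pareto efficient deterministic SCF. -/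
theorem stmt18 (k : ℕ) (hk : 6 ≤ k) :
    ¬ ∃ f : Multiset (ZMod k) → ZMod k,
      FalseNameProofD (cycleDist k) f ∧ ParetoEfficientD (cycleDist k) f := by
  rintro ⟨f, hF, hP⟩
  obtain ⟨m, rfl | rfl⟩ := Nat.even_or_odd' k
  · exact no_scf_even m (by omega) f hF hP
  · exact no_scf_odd m (by omega) f hF hP
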